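/- Let H be a Hopf algebra over k of odd index n, ω ∈ k a primitive n-th root of unity, g and α the distinguished group-like elements of H and H* respectively, and x an integer with α(g) = ω^x. Let Λ be a left integral of H and λ a right integral of H* with λ(Λ) = 1, and for b ∈ Z_2 × Z_n × Z_n let E^ω_b : H → H be the projection onto H^ω_b determined by the decomposition H = ⊕_b H^ω_b. Then for every b ∈ Z_2 × Z_n × Z_n, the dimension of H^ω_b equals λ(Σ S(E^ω_{−b+(0,−x,x)}(Λ₍₂₎)) · E^ω_b(Λ₍₁₎)), where Δ(Λ) = Σ Λ₍₁₎ ⊗ Λ₍₂₎ in Sweedler notation and addition of triples is in Z_2 × Z_n × Z_n. -/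

import Mathlib

open scoped TensorProduct

/-- A group-like element of a coalgebra: a nonzero element `a` with `Δ a = a ⊗ a`. -/
def IsGroupLike (k : Type*) {H : Type*} [CommSemiring k] [AddCommMonoid H] [Module k H]
    [Coalgebra k H] (a : H) : Prop :=
  a ≠ 0 ∧ Coalgebra.comul (R := k) a = a ⊗ₜ[k] a

/-- The convolution product on the dual of a coalgebra. -/
noncomputable def conv {k H : Type*} [CommSemiring k] [AddCommMonoid H] [Module k H]
    [Coalgebra k H] (f g : Module.Dual k H) : Module.Dual k H :=
  LinearMap.mul' k k ∘ₗ TensorProduct.map f g ∘ₗ Coalgebra.comul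

/-- `l ∈ H*` is a right integral of `H*`: `l * β = β(1) • l` for the convolution product. -/
def IsRightIntegralDual (k : Type*) {H : Type*} [CommSemiring k] [Semiring H]
    [HopfAlgebra k H] (l : Module.Dual k H) : Prop :=
  ∀ f : Module.Dual k H, conv l f = f 1 • l

/-- `Λ ∈ H` is a left integral of `H`: `a * Λ = ε(a) • Λ` for all `a`. -/
def IsLeftIntegral (k : Type*) {H : Type*} [CommSemiring k] [Semiring H]
    [HopfAlgebra k H] (L : H) : Prop :=
  ∀ a : H, a * L = Coalgebra.counit (R := k) a • L

/-- `Λ ∈ H` is a right integral of `H`: `Λ * a = ε(a) • Λ` for all `a`. -/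
def IsRightIntegral (k : Type*) {H : Type*} [CommSemiring k] [Semiring H]
    [HopfAlgebra k H] (L : H) : Prop :=
  ∀ a : H, L * a = Coalgebra.counit (R := k) a • L

/-- `g` is the distinguished group-like element of `H`: it is group-like and
`β * λ = β(g) • λ` for some nonzero right integral `λ` of `H*`. -/
def IsDistinguishedGroupLike (k : Type*) {H : Type*} [CommSemiring k] [Semiring H]
    [HopfAlgebra k H] (g : H) : Prop :=
  IsGroupLike k g ∧ ∃ l : Module.Dual k H, l ≠ 0 ∧ IsRightIntegralDual k l ∧
    ∀ f : Module.Dual k H, conv f l = f g • l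

/-- `α` is the distinguished group-like element of `H*`: an algebra map `H → k` with
`Λ * a = α(a) • Λ` for some nonzero left integral `Λ` of `H`. -/
def IsDistinguishedGroupLikeDual (k : Type*) {H : Type*} [CommSemiring k] [Semiring H]
    [HopfAlgebra k H] (α : H →ₐ[k] k) : Prop :=
  ∃ L : H, L ≠ 0 ∧ IsLeftIntegral k L ∧ ∀ a : H, L * a = α a • L

/-- `IsHopfIndex k g n` : `n` is the index of the Hopf algebra `H` with distinguished
group-like element `g`, i.e. the smallest positive integer `n` with `S ^ (4 n) = id` and
`g ^ n = 1`, where `S` is the antipode. -/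
def IsHopfIndex (k : Type*) {H : Type*} [CommSemiring k] [Semiring H] [HopfAlgebra k H]
    (g : H) (n : ℕ) : Prop :=
  0 < n ∧ (HopfAlgebra.antipode (R := k) (A := H) : Module.End k H) ^ (4 * n) = 1 ∧ g ^ n = 1 ∧
    ∀ m : ℕ, 0 < m → (HopfAlgebra.antipode (R := k) (A := H) : Module.End k H) ^ (4 * m) = 1 →
      g ^ m = 1 → n ≤ m

/-- The simultaneous eigenspace `H^ω_{a,i,j} = {u ∈ H | S² u = (-1)^a ω^i • u, u * g = ω^j • u}`
for `(a,i,j) ∈ ℤ/2 × ℤ/n × ℤ/n`. -/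
noncomputable def hopfEigenspace {k H : Type*} [CommRing k] [Ring H] [HopfAlgebra k H]
    (g : H) (ω : k) {n : ℕ} (t : ZMod 2 × ZMod n × ZMod n) : Submodule k H :=
  Module.End.eigenspace ((HopfAlgebra.antipode (R := k) (A := H) : Module.End k H) ^ 2)
      ((-1 : k) ^ t.1.val * ω ^ t.2.1.val) ⊓
    Module.End.eigenspace (LinearMap.mulRight k g : Module.End k H) (ω ^ t.2.2.val)

/-- Convolution powers of an element of the dual; the zeroth power is the counit,
the unit of the convolution algebra. -/
noncomputable def convPow {k H : Type*} [CommSemiring k] [AddCommMonoid H] [Module k H]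
    [Coalgebra k H] (f : Module.Dual k H) : ℕ → Module.Dual k H
  | 0 => Coalgebra.counit
  | m + 1 => conv f (convPow f m)

/-
The integrals `Λ`, `λ` give dual bases of `H`: `∑ λ(S(a) Λ₁) Λ₂ = a = ∑ λ(S(Λ₂) a) Λ₁`. Hence `S`
is bijective, integrals are unique up to scalars, and Radford's trace formula
`tr f = λ(∑ S(Λ₂) f(Λ₁))` holds; for `f = E_b` the trace is the dimension of `H_b`.

By uniqueness of integrals, `λ(S(a) g) = λ(a)` for all `a`, and this forces `S² Λ = α(g)⁻¹ Λ`. As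
also `Λ g = α(g) Λ`, the tensor `Δ Λ` is an eigenvector of `S² ⊗ S²` with eigenvalue `ω ^ (-x)` and,
with `R_g` the right multiplication by `g`, of `R_g ⊗ R_g` with eigenvalue `ω ^ x`. Comparing
eigenvalues, `E_b ⊗ E_t` annihilates `Δ Λ` unless `t = -b + (0, -x, x)`, so in the trace formula
`E_b(Λ₁) ⊗ Λ₂` may be replaced by `E_b(Λ₁) ⊗ E_t(Λ₂)` for this `t`.
-/

open Coalgebra HopfAlgebra WithConv

theorem mul_mul_mul_eq_one {M : Type*} [Monoid M] {x x' y y' : M} (hx : x' * x = 1)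
    (hy : y' * y = 1) : y' * x' * (x * y) = 1 := by
  rw [mul_assoc, ← mul_assoc x', hx, one_mul, hy]

section Coalgebra

variable {R C : Type*} [CommSemiring R] [AddCommMonoid C] [Module R C] [Coalgebra R C]

theorem sum_counit_right_smul {ι : Type*} {a : C} (r : Repr R a ι) :
    ∑ i ∈ r.index, counit (R := R) (r.right i) • r.left i = a := by
  simpa only [map_sum, TensorProduct.rid_tmul, one_smul] using
    congrArg (TensorProduct.rid R C) (sum_tmul_counit_eq r)

theorem conv_apply (f f' : Module.Dual R C) {ι : Type*} {a : C} (r : Repr R a ι) :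
    conv f f' a = ∑ i ∈ r.index, f (r.left i) * f' (r.right i) := by
  simp [conv, ← r.eq]

theorem conv_smul (c : R) (f f' : Module.Dual R C) : conv f (c • f') = c • conv f f' := by
  simp only [conv, TensorProduct.map_smul_right, LinearMap.smul_comp, LinearMap.comp_smul]

end Coalgebra

section Antipode

variable {R A B : Type*} [CommSemiring R] [Semiring A] [HopfAlgebra R A] [Semiring B] [Algebra R B]

theorem toConv_comp_antipode_mul_toConv (f : A →ₐ[R] B) :
    toConv (f.toLinearMap ∘ₗ antipode R) * toConv f.toLinearMap = 1 := by
  have h := LinearMap.algHom_comp_convMul_distrib f (toConv (antipode R)) (toConv LinearMap.id)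
  rw [LinearMap.antipode_mul_id] at h
  ext a
  simpa using (LinearMap.congr_fun h a).symm

theorem toConv_comul_eq_includeLeft_mul_includeRight :
    (toConv comul : WithConv (A →ₗ[R] A ⊗[R] A)) =
      toConv (Algebra.TensorProduct.includeLeft (R := R) (S := R)).toLinearMap *
        toConv Algebra.TensorProduct.includeRight.toLinearMap := by
  ext a
  rw [(ℛ R a).convMul_apply]
  simpa using (ℛ R a).eq.symm

theorem sum_antipode_tmul_one_mul_comul {ι : Type*} {a : A} (r : Repr R a ι) :
    ∑ i ∈ r.index, (antipode R (r.left i) ⊗ₜ[R] (1 : A)) * comul (r.right i) = 1 ⊗ₜ[R] a := by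
  have h := r.convMul_apply (toConv (Algebra.TensorProduct.includeLeft.toLinearMap ∘ₗ antipode R))
    (toConv (comul (R := R) (A := A)))
  rw [toConv_comul_eq_includeLeft_mul_includeRight, ← mul_assoc,
    toConv_comp_antipode_mul_toConv, one_mul,
    ← toConv_comul_eq_includeLeft_mul_includeRight] at h
  exact h.symm

/- `Δ` is invertible in the convolution algebra `Hom(A, A ⊗ A)`, and both sides are its inverse. -/
theorem comul_antipode (a : A) :
    comul (R := R) (antipode R a) =
      TensorProduct.map (antipode R) (antipode R) (TensorProduct.comm R A A (comul a)) := by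
  have left_inv :
      (toConv (Algebra.TensorProduct.includeRight.toLinearMap ∘ₗ antipode R) *
          toConv (Algebra.TensorProduct.includeLeft.toLinearMap ∘ₗ antipode R) :
        WithConv (A →ₗ[R] A ⊗[R] A)) * toConv comul = 1 := by
    rw [toConv_comul_eq_includeLeft_mul_includeRight]
    exact mul_mul_mul_eq_one (toConv_comp_antipode_mul_toConv _) (toConv_comp_antipode_mul_toConv _)
  have h := congrArg (fun f => f.ofConv a)
    (left_inv_eq_right_inv left_inv LinearMap.comul_right_inv).symm
  rw [← (ℛ R a).eq]
  refine h.trans (((ℛ R a).convMul_apply _ _).trans ?_)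
  simp

theorem comul_antipode_sq (a : A) :
    comul (R := R) (((antipode R : Module.End R A) ^ 2) a) =
      TensorProduct.map ((antipode R : Module.End R A) ^ 2) ((antipode R : Module.End R A) ^ 2)
        (comul a) := by
  rw [pow_two, Module.End.mul_apply, comul_antipode, comul_antipode, ← (ℛ R a).eq]
  simp

theorem conv_comp_antipode (f f' : Module.Dual R A) :
    conv (f ∘ₗ antipode R) (f' ∘ₗ antipode R) = conv f' f ∘ₗ antipode R := by
  ext a
  rw [conv_apply _ _ (ℛ R a), LinearMap.comp_apply, conv, LinearMap.comp_apply,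
    LinearMap.comp_apply, comul_antipode, ← (ℛ R a).eq]
  simp [mul_comm]

theorem IsLeftIntegral.antipode_tmul_one_mul_comul {L : A} (hL : IsLeftIntegral R L) (a : A) :
    (antipode R a ⊗ₜ[R] (1 : A)) * comul (R := R) L = ((1 : A) ⊗ₜ[R] a) * comul L := by
  rw [← sum_antipode_tmul_one_mul_comul (ℛ R a), Finset.sum_mul]
  simp only [mul_assoc, ← Bialgebra.comul_mul, hL _, map_smul, mul_smul_comm]
  conv_lhs => rw [← sum_counit_right_smul (ℛ R a)]
  simp only [map_sum, map_smul, TensorProduct.sum_tmul, Finset.sum_mul, ← TensorProduct.smul_tmul',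
    smul_mul_assoc]

theorem IsLeftIntegral.antipode_sq {L : A} (hL : IsLeftIntegral R L)
    (hS : Function.Surjective (antipode R (A := A))) :
    IsLeftIntegral R (((antipode R : Module.End R A) ^ 2) L) := by
  intro a
  obtain ⟨b, rfl⟩ := hS a
  obtain ⟨c, rfl⟩ := hS b
  simp only [pow_two, Module.End.mul_apply, ← antipode_mul_antidistrib, hL c, map_smul,
    counit_antipode]

end Antipode

section GroupLike

variable {R A : Type*} [CommSemiring R] [Semiring A] [Bialgebra R A] {g : A}

theorem IsGroupLike.comul_mul (hg : IsGroupLike R g) (a : A) :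
    comul (R := R) (a * g) =
      TensorProduct.map (LinearMap.mulRight R g) (LinearMap.mulRight R g) (comul a) := by
  rw [Bialgebra.comul_mul, hg.2, ← (ℛ R a).eq]
  simp [Finset.sum_mul]

theorem IsGroupLike.conv_comp_mulRight (hg : IsGroupLike R g) (f f' : Module.Dual R A) :
    conv (f ∘ₗ LinearMap.mulRight R g) (f' ∘ₗ LinearMap.mulRight R g) =
      conv f f' ∘ₗ LinearMap.mulRight R g := by
  ext a
  simp [conv, hg.comul_mul, TensorProduct.map_comp]

theorem IsGroupLike.isGroupLikeElem {k C : Type*} [Field k] [AddCommGroup C] [Module k C]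
    [Coalgebra k C] {g : C} (hg : IsGroupLike k g) : IsGroupLikeElem k g where
  counit_eq_one := by
    have h := congrArg (TensorProduct.lid k C) (rTensor_counit_comul (R := k) g)
    rw [hg.2] at h
    simp only [LinearMap.rTensor_tmul, TensorProduct.lid_tmul, one_smul] at h
    exact smul_left_injective k hg.1 (by simpa using h)
  comul_eq_tmul_self := hg.2

variable {k H : Type*} [Field k] [Ring H] [HopfAlgebra k H] {g : H}

theorem IsGroupLike.bijective_mulRight (hg : IsGroupLike k g) :
    Function.Bijective (LinearMap.mulRight k g) :=
  IsUnit.isUnit_iff_mulRight_bijective.1 hg.isGroupLikeElem.isUnit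

theorem IsGroupLike.antipode_mul_of_isLeftIntegral (hg : IsGroupLike k g) {L : H}
    (hL : IsLeftIntegral k L) : antipode k L * g = antipode k L := by
  rw [← hg.isGroupLikeElem.antipode_antipode, ← antipode_mul_antidistrib, hL]
  simp [hg.isGroupLikeElem.counit_eq_one]

end GroupLike

section DualFamily

variable {k V ι : Type*} [Field k] [AddCommGroup V] [Module k V] {s : Finset ι}

theorem finiteDimensional_of_sum_smul_eq {φ : ι → Module.Dual k V} {v : ι → V}
    (h : ∀ u, ∑ i ∈ s, φ i u • v i = u) : FiniteDimensional k V := by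
  classical
  refine ⟨⟨s.image v, eq_top_iff.2 fun u _ => ?_⟩⟩
  rw [← h u]
  exact Submodule.sum_mem _ fun i hi =>
    Submodule.smul_mem _ _ (Submodule.subset_span (Finset.mem_image_of_mem v hi))

theorem trace_eq_sum_of_sum_smul_eq {φ : ι → Module.Dual k V} {v : ι → V}
    (h : ∀ u, ∑ i ∈ s, φ i u • v i = u) (f : Module.End k V) :
    LinearMap.trace k V f = ∑ i ∈ s, φ i (f (v i)) := by
  have := finiteDimensional_of_sum_smul_eq h
  have hf : f = dualTensorHom k V V (∑ i ∈ s, φ i ⊗ₜ[k] f (v i)) := by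
    ext u
    conv_lhs => rw [← h u]
    simp [LinearMap.sum_apply]
  conv_lhs => rw [hf, LinearMap.trace_eq_contract_apply]
  simp

/- Right expansion makes `B.flip : V → V*` injective, hence surjective as `V` is
finite-dimensional, so the left expansion may be tested against the functionals `B · u`. -/
theorem sum_smul_eq_of_sum_flip_smul_eq {B : V →ₗ[k] Module.Dual k V} {v w : ι → V}
    (h : ∀ u, ∑ i ∈ s, B (v i) u • w i = u) (u : V) : ∑ i ∈ s, B u (w i) • v i = u := by
  have := finiteDimensional_of_sum_smul_eq (φ := fun i => B (v i)) h
  have hinj : Function.Injective B.flip := by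
    refine (injective_iff_map_eq_zero _).2 fun u hu => ?_
    rw [← h u]
    exact Finset.sum_eq_zero fun i _ => by
      rw [← LinearMap.flip_apply, hu, LinearMap.zero_apply, zero_smul]
  have hsurj : Function.Surjective B.flip :=
    (LinearMap.injective_iff_surjective_of_finrank_eq_finrank
      Subspace.dual_finrank_eq.symm).1 hinj
  refine sub_eq_zero.1 ((Module.forall_dual_apply_eq_zero_iff k _).1 fun f => ?_)
  obtain ⟨z, rfl⟩ := hsurj f
  have hz : B u z = ∑ i ∈ s, B (v i) z * B u (w i) := by
    conv_lhs => rw [← h z]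
    simp
  simp [hz, mul_comm]

end DualFamily

section IntegralPair

variable {k H : Type*} [Field k] [Ring H] [HopfAlgebra k H]

theorem IsRightIntegralDual.sum_smul {l : Module.Dual k H} (hl : IsRightIntegralDual k l)
    {ι : Type*} {a : H} (r : Repr k a ι) :
    ∑ i ∈ r.index, l (r.left i) • r.right i = l a • 1 := by
  refine sub_eq_zero.1 ((Module.forall_dual_apply_eq_zero_iff k _).1 fun f => ?_)
  have h : ∑ i ∈ r.index, l (r.left i) * f (r.right i) = f 1 * l a := by
    rw [← conv_apply, hl, LinearMap.smul_apply, smul_eq_mul]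
  simp [h, mul_comm]

variable (k) in
/-- A left integral `L` of `H` and a right integral `l` of `H*`, normalized by `l L = 1`. Such a
pair provides dual bases of `H`; it exists if and only if `H` is finite-dimensional. -/
structure IsNormalizedIntegralPair (L : H) (l : Module.Dual k H) : Prop where
  isLeftIntegral : IsLeftIntegral k L
  isRightIntegralDual : IsRightIntegralDual k l
  apply_eq_one : l L = 1

/-- The bilinear form `(h, a) ↦ l (S a * h)` on `H`, with respect to which the two tensor factors of
`Δ L` are dual bases for a normalized pair of integrals `L`, `l`. -/
noncomputable def antipodeForm (l : Module.Dual k H) : H →ₗ[k] Module.Dual k H :=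
  ((LinearMap.mul k H).flip.compr₂ l).compl₂ (antipode k)

theorem antipodeForm_apply (l : Module.Dual k H) (h a : H) :
    antipodeForm l h a = l (antipode k a * h) :=
  rfl

namespace IsNormalizedIntegralPair

variable {L : H} {l : Module.Dual k H} (hp : IsNormalizedIntegralPair k L l)
include hp

theorem sum_antipodeForm_smul_right {ι : Type*} (r : Repr k L ι) (a : H) :
    ∑ i ∈ r.index, antipodeForm l (r.left i) a • r.right i = a := by
  have h := congrArg ((TensorProduct.lid k H).toLinearMap ∘ₗ LinearMap.rTensor H l)
    (hp.isLeftIntegral.antipode_tmul_one_mul_comul a)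
  simp only [← r.eq, Finset.mul_sum, Algebra.TensorProduct.tmul_mul_tmul, one_mul, map_sum,
    LinearMap.comp_apply, LinearMap.rTensor_tmul, LinearEquiv.coe_coe,
    TensorProduct.lid_tmul] at h
  simpa only [antipodeForm_apply, ← mul_smul_comm, ← Finset.mul_sum,
    hp.isRightIntegralDual.sum_smul, hp.apply_eq_one, one_smul, mul_one] using h

theorem finiteDimensional : FiniteDimensional k H :=
  finiteDimensional_of_sum_smul_eq (hp.sum_antipodeForm_smul_right (ℛ k L))

theorem antipode_bijective : Function.Bijective (antipode k (A := H)) := by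
  have := hp.finiteDimensional
  have hinj : Function.Injective (antipode k (A := H)) :=
    (injective_iff_map_eq_zero _).2 fun a ha => by
      rw [← hp.sum_antipodeForm_smul_right (ℛ k L) a]
      simp [antipodeForm_apply, ha]
  exact ⟨hinj, LinearMap.injective_iff_surjective.1 hinj⟩

theorem sum_antipodeForm_smul_left {ι : Type*} (r : Repr k L ι) (a : H) :
    ∑ i ∈ r.index, antipodeForm l a (r.right i) • r.left i = a :=
  sum_smul_eq_of_sum_flip_smul_eq (hp.sum_antipodeForm_smul_right r) a

theorem trace_eq (f : Module.End k H) :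
    LinearMap.trace k H f =
      l (LinearMap.mul' k H (TensorProduct.map (antipode k) f
        (TensorProduct.comm k H H (comul L)))) := by
  rw [trace_eq_sum_of_sum_smul_eq (φ := fun i => (antipodeForm l).flip ((ℛ k L).right i))
    (hp.sum_antipodeForm_smul_left (ℛ k L)), ← (ℛ k L).eq]
  simp [antipodeForm_apply]

theorem apply_antipode : l (antipode k L) = 1 := by
  have h := congrArg (counit (R := k)) (hp.sum_antipodeForm_smul_left (ℛ k L) 1)
  have hL : ∑ i ∈ (ℛ k L).index, counit (R := k) ((ℛ k L).left i) • (ℛ k L).right i = L :=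
    sum_counit_smul (ℛ k L)
  conv_lhs => rw [← hL]
  simpa [antipodeForm_apply, mul_comm] using h

theorem eq_smul_of_isLeftIntegral {M : H} (hM : IsLeftIntegral k M) : M = l M • L := by
  conv_lhs => rw [← hp.sum_antipodeForm_smul_left (ℛ k L) M]
  simp only [antipodeForm_apply, hM _, counit_antipode, map_smul, smul_eq_mul, mul_comm _ (l M),
    mul_smul, ← Finset.smul_sum, sum_counit_right_smul]

theorem eq_smul_of_isRightIntegralDual {m : Module.Dual k H} (hm : IsRightIntegralDual k m) :
    m = m L • l := by
  ext a
  conv_lhs => rw [← hp.sum_antipodeForm_smul_left (ℛ k L) a]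
  have h := congrArg (antipodeForm l a) (hm.sum_smul (ℛ k L))
  simpa [antipodeForm_apply, mul_comm] using h

variable {g : H}

theorem conv_eq (hg : IsDistinguishedGroupLike k g) (f : Module.Dual k H) :
    conv f l = f g • l := by
  obtain ⟨-, m, hm0, hm, hmg⟩ := hg
  have hml := hp.eq_smul_of_isRightIntegralDual hm
  have hc : m L ≠ 0 := fun h => hm0 (by rw [hml, h, zero_smul])
  have h : m L • conv f l = m L • f g • l := by rw [← conv_smul, smul_comm, ← hml, hmg]
  exact smul_right_injective _ hc h

theorem mul_eq {α : H →ₐ[k] k} (hα : IsDistinguishedGroupLikeDual k α) (a : H) :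
    L * a = α a • L := by
  obtain ⟨M, hM0, hM, hMα⟩ := hα
  have hML := hp.eq_smul_of_isLeftIntegral hM
  have hc : l M ≠ 0 := fun h => hM0 (by rw [hML, h, zero_smul])
  have h : l M • (L * a) = l M • α a • L := by rw [← smul_mul_assoc, smul_comm, ← hML, hMα]
  exact smul_right_injective _ hc h

theorem isRightIntegralDual_mulRight_antipode (hg : IsDistinguishedGroupLike k g) :
    IsRightIntegralDual k ((l ∘ₗ LinearMap.mulRight k g) ∘ₗ antipode k) := by
  intro f
  obtain ⟨F, rfl⟩ : ∃ F : Module.Dual k H, (F ∘ₗ LinearMap.mulRight k g) ∘ₗ antipode k = f := by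
    let e := LinearEquiv.ofBijective (LinearMap.mulRight k g ∘ₗ antipode k)
      (hg.1.bijective_mulRight.comp hp.antipode_bijective)
    exact ⟨f ∘ₗ e.symm.toLinearMap, LinearMap.ext fun a => congrArg f (e.symm_apply_apply a)⟩
  rw [conv_comp_antipode, hg.1.conv_comp_mulRight, hp.conv_eq hg]
  simp [LinearMap.smul_comp]

theorem apply_antipode_mul (hg : IsDistinguishedGroupLike k g) (a : H) :
    l (antipode k a * g) = l a := by
  have h := hp.eq_smul_of_isRightIntegralDual (hp.isRightIntegralDual_mulRight_antipode hg)
  simpa [hg.1.antipode_mul_of_isLeftIntegral hp.isLeftIntegral, hp.apply_antipode] using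
    LinearMap.congr_fun h a

theorem smul_antipode_sq_eq (hg : IsDistinguishedGroupLike k g) {α : H →ₐ[k] k}
    (hα : IsDistinguishedGroupLikeDual k α) :
    α g • ((antipode k : Module.End k H) ^ 2) L = L := by
  have hSL := hp.eq_smul_of_isLeftIntegral
    (hp.isLeftIntegral.antipode_sq hp.antipode_bijective.surjective)
  set c := l (((antipode k : Module.End k H) ^ 2) L)
  have hc : α g * c = 1 := by
    have h : l (((antipode k : Module.End k H) ^ 2) L * g) = 1 :=
      (hp.apply_antipode_mul hg (antipode k L)).trans hp.apply_antipode
    rw [hSL, smul_mul_assoc, hp.mul_eq hα, map_smul, map_smul, hp.apply_eq_one] at h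
    simpa [mul_comm] using h
  rw [hSL, smul_smul, hc, one_smul]

theorem map_antipode_sq_comul (hg : IsDistinguishedGroupLike k g) {α : H →ₐ[k] k}
    (hα : IsDistinguishedGroupLikeDual k α) :
    TensorProduct.map ((antipode k : Module.End k H) ^ 2) ((antipode k : Module.End k H) ^ 2)
      (comul L) = (α g)⁻¹ • comul (R := k) L := by
  have hαg : α g ≠ 0 := (hg.1.isGroupLikeElem.isUnit.map α).ne_zero
  rw [← comul_antipode_sq, ← map_smul, (eq_inv_smul_iff₀ hαg).2 (hp.smul_antipode_sq_eq hg hα)]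

theorem map_mulRight_comul (hg : IsGroupLike k g) {α : H →ₐ[k] k}
    (hα : IsDistinguishedGroupLikeDual k α) :
    TensorProduct.map (LinearMap.mulRight k g) (LinearMap.mulRight k g) (comul L) =
      α g • comul (R := k) L := by
  rw [← hg.comul_mul, hp.mul_eq hα, map_smul]

end IsNormalizedIntegralPair

end IntegralPair

section Projections

theorem mul_eq_smul_of_mul_eq_smul {R A ι : Type*} [CommSemiring R] [Semiring A] [Algebra R A]
    [Fintype ι] {e : ι → A} (he : CompleteOrthogonalIdempotents e) {a : A} {c : ι → R}
    (ha : ∀ i, a * e i = c i • e i) (i : ι) : e i * a = c i • e i := by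
  classical
  conv_lhs => rw [← mul_one a, ← he.complete]
  simp [Finset.mul_sum, ha, he.mul_eq]

variable {k V W : Type*} [Field k] [AddCommGroup V] [Module k V] [AddCommGroup W] [Module k W]

theorem map_eq_zero_of_comp_eq_smul {P T : Module.End k V} {Q T' : Module.End k W} {c d e : k}
    (hP : P ∘ₗ T = c • P) (hQ : Q ∘ₗ T' = d • Q) {w : V ⊗[k] W}
    (hw : TensorProduct.map T T' w = e • w) (hcd : c * d ≠ e) : TensorProduct.map P Q w = 0 := by
  have h := congrArg (TensorProduct.map P Q) hw
  rw [map_smul, ← LinearMap.comp_apply, ← TensorProduct.map_comp, hP, hQ,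
    TensorProduct.map_smul_left, TensorProduct.map_smul_right, smul_smul] at h
  by_contra hne
  exact hcd (smul_left_injective k hne h)

theorem map_eq_rTensor_of_forall_ne {R U M N ι : Type*} [CommSemiring R] [AddCommMonoid U]
    [Module R U] [AddCommMonoid M] [Module R M] [AddCommMonoid N] [Module R N] [Fintype ι]
    {Q : ι → Module.End R N} (hQ : ∑ i, Q i = 1) (f : U →ₗ[R] M) {w : U ⊗[R] N} {j : ι}
    (hw : ∀ i, i ≠ j → TensorProduct.map f (Q i) w = 0) :
    TensorProduct.map f (Q j) w = LinearMap.rTensor N f w := by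
  have hsum : LinearMap.rTensor N f = ∑ i, TensorProduct.map f (Q i) := by
    ext u v
    simp only [TensorProduct.AlgebraTensorModule.curry_apply, LinearMap.restrictScalars_self,
      TensorProduct.curry_apply, LinearMap.rTensor_tmul, LinearMap.sum_apply,
      TensorProduct.map_tmul, ← TensorProduct.tmul_sum]
    rw [← LinearMap.sum_apply, hQ, Module.End.one_apply]
  rw [hsum, LinearMap.sum_apply]
  exact (Fintype.sum_eq_single j hw).symm

end Projections

section Weights

theorem intCast_eq_zero_of_zpow_eq_one {G : Type*} [DivisionCommMonoid G] {n : ℕ} {ω : G}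
    (hω : IsPrimitiveRoot ω n) {z : ℤ} (h : ω ^ z = 1) : (z : ZMod n) = 0 :=
  (ZMod.intCast_zmod_eq_zero_iff_dvd z n).2 ((hω.zpow_eq_one_iff_dvd z).1 h)

variable {k : Type*} [Field k] {n : ℕ} {ω : k}

theorem even_of_neg_one_pow_mul_zpow_eq_one [NeZero (2 : k)] (hn : Odd n) (hω : ω ^ n = 1)
    {m : ℕ} {z : ℤ} (h : (-1) ^ m * ω ^ z = 1) : Even m := by
  by_contra hodd
  have hωz : (ω ^ z) ^ n = 1 := by
    rw [← zpow_natCast, zpow_comm, zpow_natCast, hω, one_zpow]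
  have hpow : ((-1) ^ m * ω ^ z) ^ n = 1 := by rw [h, one_pow]
  rw [mul_pow, hωz, (Nat.not_even_iff_odd.1 hodd).neg_one_pow, hn.neg_one_pow, mul_one] at hpow
  exact two_ne_zero (α := k) (by linear_combination -hpow)

theorem eq_neg_add_of_weights [NeZero (2 : k)] [NeZero n] (hn : Odd n) (hω : IsPrimitiveRoot ω n)
    {x : ℤ} {b t : ZMod 2 × ZMod n × ZMod n}
    (h₁ : (-1) ^ b.1.val * ω ^ b.2.1.val * ((-1) ^ t.1.val * ω ^ t.2.1.val) = (ω ^ x)⁻¹)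
    (h₂ : ω ^ b.2.2.val * ω ^ t.2.2.val = ω ^ x) :
    t = -b + ((0 : ZMod 2), ((-x : ℤ) : ZMod n), ((x : ℤ) : ZMod n)) := by
  have hω0 : ω ≠ 0 := hω.ne_zero (NeZero.ne n)
  have hωx : ω ^ x ≠ 0 := zpow_ne_zero x hω0
  have hsign : (-1) ^ (b.1.val + t.1.val) * ω ^ (x + b.2.1.val + t.2.1.val) = 1 := by
    rw [zpow_add₀ hω0, zpow_add₀ hω0, zpow_natCast, zpow_natCast, pow_add]
    linear_combination ω ^ x * h₁ + mul_inv_cancel₀ hωx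
  have heven := even_of_neg_one_pow_mul_zpow_eq_one hn hω.pow_eq_one hsign
  rw [heven.neg_one_pow, one_mul] at hsign
  have hi := intCast_eq_zero_of_zpow_eq_one hω hsign
  have hj := intCast_eq_zero_of_zpow_eq_one hω (z := b.2.2.val + t.2.2.val - x) <| by
    rw [zpow_sub₀ hω0, zpow_add₀ hω0, zpow_natCast, zpow_natCast, h₂, div_self hωx]
  have ha : ((b.1.val + t.1.val : ℕ) : ZMod 2) = 0 := ZMod.natCast_eq_zero_iff_even.2 heven
  push_cast at ha hi hj
  simp only [ZMod.natCast_zmod_val] at ha hi hj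
  refine Prod.ext ?_ (Prod.ext ?_ ?_)
  · simpa using eq_neg_of_add_eq_zero_right ha
  · simp only [Prod.snd_add, Prod.fst_add, Prod.snd_neg, Prod.fst_neg, Int.cast_neg]
    linear_combination hi
  · simp only [Prod.snd_add, Prod.snd_neg]
    linear_combination hj

end Weights

section EigenspaceProjections

variable {k : Type*} [Field k] [NeZero (2 : k)] {n : ℕ} [NeZero n]
  {H : Type*} [Ring H] [HopfAlgebra k H] {g L : H} {l : Module.Dual k H} {ω : k}
  {E : (ZMod 2 × ZMod n × ZMod n) → Module.End k H}

theorem IsNormalizedIntegralPair.map_comul_eq_zero_of_ne (hp : IsNormalizedIntegralPair k L l)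
    (hn : Odd n) (hg : IsDistinguishedGroupLike k g) {α : H →ₐ[k] k}
    (hα : IsDistinguishedGroupLikeDual k α) (hω : IsPrimitiveRoot ω n) {x : ℤ}
    (hx : α g = ω ^ x) (hE : CompleteOrthogonalIdempotents E)
    (hEmem : ∀ t u, E t u ∈ hopfEigenspace g ω t) {b t : ZMod 2 × ZMod n × ZMod n}
    (ht : t ≠ -b + ((0 : ZMod 2), ((-x : ℤ) : ZMod n), ((x : ℤ) : ZMod n))) :
    TensorProduct.map (E b) (E t) (comul (R := k) L) = 0 := by
  have hES := mul_eq_smul_of_mul_eq_smul hE (a := (antipode k : Module.End k H) ^ 2)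
    (c := fun t => (-1 : k) ^ t.1.val * ω ^ t.2.1.val)
    fun t => LinearMap.ext fun u => Module.End.mem_eigenspace_iff.1 (hEmem t u).1
  have hEg := mul_eq_smul_of_mul_eq_smul hE (a := (LinearMap.mulRight k g : Module.End k H))
    (c := fun t => ω ^ t.2.2.val)
    fun t => LinearMap.ext fun u => Module.End.mem_eigenspace_iff.1 (hEmem t u).2
  by_contra hne
  refine ht (eq_neg_add_of_weights hn hω (by_contra fun hweight => hne ?_)
    (by_contra fun hweight => hne ?_))
  · exact map_eq_zero_of_comp_eq_smul (hES b) (hES t) (hp.map_antipode_sq_comul hg hα)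
      (hx ▸ hweight)
  · exact map_eq_zero_of_comp_eq_smul (hEg b) (hEg t) (hp.map_mulRight_comul hg.1 hα)
      (hx ▸ hweight)

end EigenspaceProjections

theorem stmt12_general (k : Type*) [Field k] [NeZero (2 : k)]
    (n : ℕ) (hn : Odd n) [NeZero n]
    (H : Type*) [Ring H] [HopfAlgebra k H]
    (g : H) (hg : IsDistinguishedGroupLike k g)
    (α : H →ₐ[k] k) (hα : IsDistinguishedGroupLikeDual k α)
    (ω : k) (hω : IsPrimitiveRoot ω n)
    (x : ℤ) (hx : α g = ω ^ x)
    (Λ : H) (hΛ : IsLeftIntegral k Λ)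
    (lam : Module.Dual k H) (hlam : IsRightIntegralDual k lam) (hpair : lam Λ = 1)
    (E : (ZMod 2 × ZMod n × ZMod n) → Module.End k H)
    (hEmem : ∀ t u, E t u ∈ hopfEigenspace g ω t)
    (hEid : ∀ t, ∀ u ∈ hopfEigenspace g ω t, E t u = u)
    (hEorth : ∀ t t', t ≠ t' → E t * E t' = 0)
    (hEsum : ∑ t : ZMod 2 × ZMod n × ZMod n, E t = 1)
    (b : ZMod 2 × ZMod n × ZMod n) :
    (Module.finrank k (hopfEigenspace g ω b) : k) =
      lam ((LinearMap.mul' k H ∘ₗ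
        TensorProduct.map
          ((antipode k : Module.End k H) ∘ₗ
            E (-b + ((0 : ZMod 2), ((-x : ℤ) : ZMod n), ((x : ℤ) : ZMod n))))
          (E b) ∘ₗ
        (TensorProduct.comm k H H).toLinearMap) (comul (R := k) Λ)) := by
  have hp : IsNormalizedIntegralPair k Λ lam := ⟨hΛ, hlam, hpair⟩
  have hE : CompleteOrthogonalIdempotents E :=
    ⟨⟨fun t => LinearMap.ext fun u => hEid t _ (hEmem t u), fun t t' => hEorth t t'⟩, hEsum⟩
  have hproj : LinearMap.IsProj (hopfEigenspace g ω b) (E b) := ⟨hEmem b, hEid b⟩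
  have := hp.finiteDimensional
  have hEE := map_eq_rTensor_of_forall_ne hEsum (E b) fun t ht =>
    hp.map_comul_eq_zero_of_ne hn hg hα hω hx hE hEmem ht
  have hSE := congrArg (TensorProduct.map LinearMap.id (antipode k)) hEE
  rw [LinearMap.rTensor, TensorProduct.map_map, TensorProduct.map_map, LinearMap.id_comp,
    LinearMap.comp_id] at hSE
  rw [← hproj.trace, hp.trace_eq]
  simp only [LinearMap.comp_apply, LinearEquiv.coe_coe, TensorProduct.map_comm, hSE]

/-- Lemma 4.2. Let `H` be a Hopf algebra of odd index `n` over an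
algebraically closed field of characteristic `0`, `ω` a primitive `n`-th root of unity,
`g`, `α` the distinguished group-like elements of `H`, `H*`, and `x` an integer with
`α(g) = ω^x`. Let `Λ` be a left integral of `H` and `lam` a right integral of `H*` with
`lam Λ = 1`, and let `E_𝐛` be the family of projections onto the summands of the eigenspace
decomposition `H = ⊕_𝐛 H^ω_𝐛`. Then for every `𝐛`,
`dim H^ω_𝐛 = lam (Σ S(E_{−𝐛+(0,−x,x)}(Λ₂)) * E_𝐛(Λ₁))`, the inner expression being the image
of `Δ(Λ) = Σ Λ₁ ⊗ Λ₂` under the map `h₁ ⊗ h₂ ↦ S(E_{−𝐛+(0,−x,x)}(h₂)) * E_𝐛(h₁)`. -/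
theorem stmt12 (k : Type*) [Field k] [IsAlgClosed k] [CharZero k]
    (n : ℕ) (hn : Odd n) [NeZero n]
    (H : Type*) [Ring H] [HopfAlgebra k H] [FiniteDimensional k H]
    (g : H) (hg : IsDistinguishedGroupLike k g) (hidx : IsHopfIndex k g n)
    (α : H →ₐ[k] k) (hα : IsDistinguishedGroupLikeDual k α)
    (ω : k) (hω : IsPrimitiveRoot ω n)
    (x : ℤ) (hx : α g = ω ^ x)
    (Λ : H) (hΛ : IsLeftIntegral k Λ)
    (lam : Module.Dual k H) (hlam : IsRightIntegralDual k lam) (hpair : lam Λ = 1)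
    (E : (ZMod 2 × ZMod n × ZMod n) → Module.End k H)
    (hEmem : ∀ t u, E t u ∈ hopfEigenspace g ω t)
    (hEid : ∀ t, ∀ u ∈ hopfEigenspace g ω t, E t u = u)
    (hEorth : ∀ t t', t ≠ t' → E t * E t' = 0)
    (hEsum : ∑ t : ZMod 2 × ZMod n × ZMod n, E t = 1) :
    ∀ b : ZMod 2 × ZMod n × ZMod n,
      (Module.finrank k (hopfEigenspace g ω b) : k) =
        lam ((LinearMap.mul' k H ∘ₗ
          TensorProduct.map
            ((HopfAlgebra.antipode (R := k) (A := H) : Module.End k H) ∘ₗ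
              E (-b + ((0 : ZMod 2), ((-x : ℤ) : ZMod n), ((x : ℤ) : ZMod n))))
            (E b) ∘ₗ
          (TensorProduct.comm k H H).toLinearMap) (Coalgebra.comul (R := k) Λ)) := by
  exact stmt12_general k n hn H g hg α hα ω hω x hx Λ hΛ lam hlam hpair E hEmem hEid hEorth hEsum
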